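/- Let G be a set of atomic constraints over a finite set X of clocks, let φ = x − y ◁ c be a diagonal constraint in G, and let G' = G \ {φ}. Then for all sets Z, Z' of valuations: Z ⊑_G Z' if and only if (Z ∩ φ) ⊑_{G'} (Z' ∩ φ) and (Z ∩ ¬φ) ⊑_{G'} Z', where Z ∩ φ = {v ∈ Z | v ⊨ φ} and Z ∩ ¬φ = {v ∈ Z | v ⊭ φ}. -/

import Mathlib

open scoped NNReal

/-! ## Atomic constraints over a set of clocks -/

/-- Comparison operator `◁ ∈ {<, ≤}`. -/
inductive Ineq : Type where
  | lt : Ineq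
  | le : Ineq
deriving DecidableEq

/-- Interpretation of a comparison operator on reals. -/
def Ineq.holds : Ineq → ℝ → ℝ → Prop
  | .lt, a, b => a < b
  | .le, a, b => a ≤ b

/-- Atomic constraints over clocks `X`:
`upper x o c` is `x ◁ c` (c ∈ ℕ), `lower c o x` is `c ◁ x` (c ∈ ℕ),
`diag x y o d` is `x - y ◁ d` (d ∈ ℤ). -/
inductive Constr (X : Type) : Type where
  | upper : X → Ineq → ℕ → Constr X
  | lower : ℕ → Ineq → X → Constr X
  | diag : X → X → Ineq → ℤ → Constr X
deriving DecidableEq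

namespace Constr

/-- Is the constraint a diagonal constraint `x - y ◁ d`? -/
def isDiag {X : Type} : Constr X → Bool
  | .diag _ _ _ _ => true
  | _ => false

/-- The integer constant of a constraint. -/
def constOf {X : Type} : Constr X → ℤ
  | .upper _ _ c => (c : ℤ)
  | .lower c _ _ => (c : ℤ)
  | .diag _ _ _ d => d

/-- Satisfaction of a constraint by a clock valuation `v : X → ℝ≥0`. -/
def sat {X : Type} (v : X → ℝ≥0) : Constr X → Prop
  | .upper x o c => o.holds (v x : ℝ) (c : ℝ)
  | .lower c o x => o.holds (c : ℝ) (v x : ℝ)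
  | .diag x y o d => o.holds ((v x : ℝ) - (v y : ℝ)) (d : ℝ)

end Constr

/-- Time elapse: `v + δ`. -/
def shift {X : Type} (v : X → ℝ≥0) (δ : ℝ≥0) : X → ℝ≥0 := fun x => v x + δ

/-- The relation `v ⊑_G v'`: for all `φ ∈ G` and all delays `δ ≥ 0`,
`v + δ ⊨ φ` implies `v' + δ ⊨ φ`. -/
def simG {X : Type} (G : Set (Constr X)) (v v' : X → ℝ≥0) : Prop :=
  ∀ φ ∈ G, ∀ δ : ℝ≥0, Constr.sat (shift v δ) φ → Constr.sat (shift v' δ) φ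

/-- `Z ⊑_G Z'` on sets of valuations. -/
def simGZ {X : Type} (G : Set (Constr X)) (Z Z' : Set (X → ℝ≥0)) : Prop :=
  ∀ v ∈ Z, ∃ v' ∈ Z', simG G v v'

open Classical in
/-- `[R]v`: reset the clocks in `R` to `0`. -/
noncomputable def reset {X : Type} (R : Set X) (v : X → ℝ≥0) : X → ℝ≥0 :=
  fun x => if x ∈ R then 0 else v x

/-- Weakest precondition `wp(⊑_φ, R)` of a single constraint over a reset. -/
def wpReset {X : Type} (R : Set X) : Constr X → Set (Constr X)
  | .upper x o c => {ψ | x ∉ R ∧ ψ = .upper x o c}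
  | .lower c o x => {ψ | x ∉ R ∧ ψ = .lower c o x}
  | .diag x y o d =>
      {ψ | (x ∉ R ∧ y ∉ R ∧ ψ = .diag x y o d) ∨
           (x ∉ R ∧ y ∈ R ∧ 0 ≤ d ∧ ψ = .upper x o d.toNat) ∨
           (x ∈ R ∧ y ∉ R ∧ 0 ≤ -d ∧ ψ = .lower (-d).toNat o y)}

/-- Weakest precondition `wp(⊑_G, R)` of a set of constraints over a reset. -/
def wpResetSet {X : Type} (R : Set X) (G : Set (Constr X)) : Set (Constr X) :=
  ⋃ φ ∈ G, wpReset R φ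

/-! ## Timed automata -/

/-- A transition: source state, guard (finite conjunction of constraints),
reset set, target state. -/
abbrev TTrans (Q X : Type) : Type := Q × Finset (Constr X) × Set X × Q

def TTrans.src {Q X : Type} (t : TTrans Q X) : Q := t.1
def TTrans.grd {Q X : Type} (t : TTrans Q X) : Finset (Constr X) := t.2.1
def TTrans.rst {Q X : Type} (t : TTrans Q X) : Set X := t.2.2.1
def TTrans.tgt {Q X : Type} (t : TTrans Q X) : Q := t.2.2.2

/-- A timed automaton. -/
structure TA (Q X : Type) : Type where
  init : Q
  trans : Finset (TTrans Q X)
  acc : Set Q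

/-- Action step of a timed automaton along transition `t`. -/
def Step {Q X : Type} (A : TA Q X) (t : TTrans Q X) (c c' : Q × (X → ℝ≥0)) : Prop :=
  t ∈ A.trans ∧ TTrans.src t = c.1 ∧ (∀ φ ∈ TTrans.grd t, Constr.sat c.2 φ) ∧
    c'.1 = TTrans.tgt t ∧ c'.2 = reset (TTrans.rst t) c.2

/-- `r` is a simulation on the configurations of `A`: a reflexive transitive
relation, relating only configurations with equal states, compatible with
delays and action transitions. -/
def IsSimulation {Q X : Type} (A : TA Q X)
    (r : (Q × (X → ℝ≥0)) → (Q × (X → ℝ≥0)) → Prop) : Prop :=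
  Reflexive r ∧ Transitive r ∧
  ∀ q v q' v', r (q, v) (q', v') →
    q = q' ∧
    (∀ δ : ℝ≥0, ∃ δ' : ℝ≥0, r (q, shift v δ) (q, shift v' δ')) ∧
    (∀ t c₁, Step A t (q, v) c₁ →
      ∃ v₁', Step A t (q, v') (c₁.1, v₁') ∧ r c₁ (c₁.1, v₁'))

/-- The state-based guard equations:
`G(q) = ⋃_{(q,g,R,q₁) ∈ T} ({g} ∪ wp(⊑_{G(q₁)}, R))`. -/
def GuardEq {Q X : Type} (A : TA Q X) (G : Q → Set (Constr X)) : Prop :=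
  ∀ q, G q = ⋃ t ∈ A.trans, ⋃ (_ : TTrans.src t = q),
    ((TTrans.grd t : Set (Constr X)) ∪ wpResetSet (TTrans.rst t) (G (TTrans.tgt t)))

/-! ## LU bounds -/

def lowerConstAt {X : Type} [DecidableEq X] (x : X) : Constr X → WithBot ℕ
  | .lower c _ y => if y = x then (c : WithBot ℕ) else ⊥
  | _ => ⊥

def upperConstAt {X : Type} [DecidableEq X] (x : X) : Constr X → WithBot ℕ
  | .upper y _ c => if y = x then (c : WithBot ℕ) else ⊥
  | _ => ⊥

/-- `L_G(x)`: maximum constant among lower-bound constraints `c ◁ x` in `G`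
(`⊥ = -∞` if none). -/
def Lbound {X : Type} [DecidableEq X] (G : Finset (Constr X)) (x : X) : WithBot ℕ :=
  G.sup (lowerConstAt x)

/-- `U_G(x)`: maximum constant among upper-bound constraints `x ◁ c` in `G`
(`⊥ = -∞` if none). -/
def Ubound {X : Type} [DecidableEq X] (G : Finset (Constr X)) (x : X) : WithBot ℕ :=
  G.sup (upperConstAt x)

/-- The LU simulation `v ≼_LU v'` for bounds functions `L U : X → ℕ ∪ {-∞}`. -/
def luSim {X : Type} (L U : X → WithBot ℕ) (v v' : X → ℝ≥0) : Prop :=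
  ∀ x : X,
    (v' x < v x → (L x).map (fun c : ℕ => (c : ℝ)) < ((v' x : ℝ) : WithBot ℝ)) ∧
    (v x < v' x → (U x).map (fun c : ℕ => (c : ℝ)) < ((v x : ℝ) : WithBot ℝ))

/-- The relation `v ⊑^LU_G v'`: `v ≼_{LU(G)} v'` and every diagonal constraint
of `G` satisfied by `v` is satisfied by `v'`. -/
def luglu {X : Type} [DecidableEq X] (G : Finset (Constr X)) (v v' : X → ℝ≥0) : Prop :=
  luSim (Lbound G) (Ubound G) v v' ∧
    ∀ φ ∈ G, φ.isDiag → Constr.sat v φ → Constr.sat v' φ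

/-- Lifting a relation on valuations to sets of valuations. -/
def zoneRel {X : Type} (r : (X → ℝ≥0) → (X → ℝ≥0) → Prop) (Z Z' : Set (X → ℝ≥0)) : Prop :=
  ∀ v ∈ Z, ∃ v' ∈ Z', r v v'

/-! ## Runs of timed automata -/

/-- `stepsFrom A c l`: the alternating delay-action sequence `l` is a valid
sequence of steps of `A` starting at configuration `c`. -/
def stepsFrom {Q X : Type} (A : TA Q X) :
    (Q × (X → ℝ≥0)) → List (ℝ≥0 × TTrans Q X) → Prop
  | _, [] => True
  | c, (δ, t) :: l =>
      t ∈ A.trans ∧ TTrans.src t = c.1 ∧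
      (∀ φ ∈ TTrans.grd t, Constr.sat (shift c.2 δ) φ) ∧
      stepsFrom A (TTrans.tgt t, reset (TTrans.rst t) (shift c.2 δ)) l

/-- Configuration reached after a sequence of delay-action steps. -/
noncomputable def endConfig {Q X : Type} :
    (Q × (X → ℝ≥0)) → List (ℝ≥0 × TTrans Q X) → (Q × (X → ℝ≥0))
  | c, [] => c
  | c, (δ, t) :: l => endConfig (TTrans.tgt t, reset (TTrans.rst t) (shift c.2 δ)) l

/-- A run of `A`: a valid sequence of delay-action steps from `(q₀, 0̄)`. -/
def TA.Run {Q X : Type} (A : TA Q X) : Type :=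
  {l : List (ℝ≥0 × TTrans Q X) // stepsFrom A (A.init, fun _ => 0) l}

/-- A run is accepting if it ends in an accepting state. -/
def TA.Accepting {Q X : Type} (A : TA Q X) (r : A.Run) : Prop :=
  (endConfig (A.init, fun _ => 0) r.val).1 ∈ A.acc

/-- `A` is diagonal-free: no guard contains a diagonal constraint. -/
def DiagFree {Q X : Type} (A : TA Q X) : Prop :=
  ∀ t ∈ A.trans, ∀ φ ∈ TTrans.grd t, ¬ φ.isDiag

/-- The (finite) set of diagonal constraints occurring in guards of `A`. -/
def diagGuards {Q X : Type} [DecidableEq X] (A : TA Q X) : Finset (Constr X) :=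
  A.trans.biUnion fun t => (TTrans.grd t).filter fun φ => φ.isDiag

/-! ## Updateable timed automata -/

/-- Atomic update of a clock: `x := c` or `x := y + d`. -/
inductive AtomicUp (X : Type) : Type where
  | const : ℕ → AtomicUp X
  | add : X → ℤ → AtomicUp X
deriving DecidableEq

/-- `up(v) : X → ℝ` (may be negative). -/
def applyUpd {X : Type} (up : X → AtomicUp X) (v : X → ℝ≥0) : X → ℝ :=
  fun x => match up x with
    | .const c => (c : ℝ)
    | .add y d => (v y : ℝ) + (d : ℝ)

/-- Weakest precondition `wp(⊑_φ, up)` of a single constraint over an update. -/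
def wpUpd {X : Type} [DecidableEq X] (up : X → AtomicUp X) : Constr X → Set (Constr X)
  | .upper x o c =>
      match up x with
      | .const _ => ∅
      | .add y d => if 0 ≤ (c : ℤ) - d then {Constr.upper y o ((c : ℤ) - d).toNat} else ∅
  | .lower c o x =>
      match up x with
      | .const _ => ∅
      | .add y d => if 0 ≤ (c : ℤ) - d then {Constr.lower ((c : ℤ) - d).toNat o y} else ∅
  | .diag x y o c =>
      match up x, up y with
      | .const _, .const _ => ∅
      | .add y₁ d₁, .const c₂ =>
          if 0 ≤ c + (c₂ : ℤ) - d₁ then {Constr.upper y₁ o (c + (c₂ : ℤ) - d₁).toNat} else ∅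
      | .const c₁, .add y₂ d₂ =>
          if 0 ≤ (c₁ : ℤ) - d₂ - c then {Constr.lower ((c₁ : ℤ) - d₂ - c).toNat o y₂} else ∅
      | .add y₁ d₁, .add y₂ d₂ =>
          if y₁ = y₂ then ∅ else {Constr.diag y₁ y₂ o (c - d₁ + d₂)}

/-- Weakest precondition `wp(⊑_G, up)` of a set of constraints over an update. -/
def wpUpdSet {X : Type} [DecidableEq X] (up : X → AtomicUp X) (G : Set (Constr X)) :
    Set (Constr X) :=
  ⋃ φ ∈ G, wpUpd up φ

/-- The set of constraints `{0 ≤ x | x ∈ X}`. -/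
def nonnegConstrs (X : Type) : Set (Constr X) := {φ | ∃ x : X, φ = Constr.lower 0 Ineq.le x}

/-- A transition of an updateable timed automaton: source, guard, update, target. -/
abbrev UTrans (Q X : Type) : Type := Q × Finset (Constr X) × (X → AtomicUp X) × Q

def UTrans.src {Q X : Type} (t : UTrans Q X) : Q := t.1
def UTrans.grd {Q X : Type} (t : UTrans Q X) : Finset (Constr X) := t.2.1
def UTrans.upd {Q X : Type} (t : UTrans Q X) : X → AtomicUp X := t.2.2.1
def UTrans.tgt {Q X : Type} (t : UTrans Q X) : Q := t.2.2.2

/-- An updateable timed automaton. -/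
structure UTA (Q X : Type) : Type where
  init : Q
  trans : Finset (UTrans Q X)
  acc : Set Q

/-- Action step of an updateable timed automaton along transition `t`:
the guard holds, `up(v) ≥ 0`, and the new valuation is `up(v)`. -/
def UStep {Q X : Type} (A : UTA Q X) (t : UTrans Q X) (c c' : Q × (X → ℝ≥0)) : Prop :=
  t ∈ A.trans ∧ UTrans.src t = c.1 ∧ (∀ φ ∈ UTrans.grd t, Constr.sat c.2 φ) ∧
    c'.1 = UTrans.tgt t ∧ ∀ x, (c'.2 x : ℝ) = applyUpd (UTrans.upd t) c.2 x

/-- `r` is a simulation on configurations of an updateable timed automaton. -/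
def IsSimulationU {Q X : Type} (A : UTA Q X)
    (r : (Q × (X → ℝ≥0)) → (Q × (X → ℝ≥0)) → Prop) : Prop :=
  Reflexive r ∧ Transitive r ∧
  ∀ q v q' v', r (q, v) (q', v') →
    q = q' ∧
    (∀ δ : ℝ≥0, ∃ δ' : ℝ≥0, r (q, shift v δ) (q, shift v' δ')) ∧
    (∀ t c₁, UStep A t (q, v) c₁ →
      ∃ v₁', UStep A t (q, v') (c₁.1, v₁') ∧ r c₁ (c₁.1, v₁'))

/-- State-based guard equations for updateable timed automata. -/
def GuardEqU {Q X : Type} [DecidableEq X] (A : UTA Q X) (G : Q → Set (Constr X)) : Prop :=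
  ∀ q, G q = ⋃ t ∈ A.trans, ⋃ (_ : UTrans.src t = q),
    ((UTrans.grd t : Set (Constr X)) ∪ wpUpdSet (UTrans.upd t) (nonnegConstrs X)
      ∪ wpUpdSet (UTrans.upd t) (G (UTrans.tgt t)))

/-- Kleene iterates `G^i(q)` of the state-based guard equations. -/
def iterG {Q X : Type} [DecidableEq X] (A : UTA Q X) : ℕ → Q → Set (Constr X)
  | 0 => fun q => ⋃ t ∈ A.trans, ⋃ (_ : UTrans.src t = q),
      ((UTrans.grd t : Set (Constr X)) ∪ wpUpdSet (UTrans.upd t) (nonnegConstrs X))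
  | (i + 1) => fun q => iterG A i q ∪
      (⋃ t ∈ A.trans, ⋃ (_ : UTrans.src t = q),
        wpUpdSet (UTrans.upd t) (iterG A i (UTrans.tgt t)))

/-- `G^{i+1}(q)` is coloured red: a new diagonal constraint was added, or a new
non-diagonal constraint whose constant is strictly bigger than the constant of
every non-diagonal constraint of the same kind on the same clock in `G^i(q)`. -/
def RedAt {Q X : Type} [DecidableEq X] (A : UTA Q X) : ℕ → Q → Prop
  | 0, _ => False
  | (i + 1), q =>
      (∃ φ : Constr X, φ ∈ iterG A (i + 1) q ∧ φ ∉ iterG A i q ∧ φ.isDiag) ∨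
      (∃ (x : X) (o : Ineq) (c : ℕ),
        Constr.upper x o c ∈ iterG A (i + 1) q ∧ Constr.upper x o c ∉ iterG A i q ∧
        ∀ (o' : Ineq) (c' : ℕ), Constr.upper x o' c' ∈ iterG A i q → c' < c) ∨
      (∃ (x : X) (o : Ineq) (c : ℕ),
        Constr.lower c o x ∈ iterG A (i + 1) q ∧ Constr.lower c o x ∉ iterG A i q ∧
        ∀ (o' : Ineq) (c' : ℕ), Constr.lower c' o' x ∈ iterG A i q → c' < c)

/-- `G^i(q)` is coloured green. -/
def GreenAt {Q X : Type} [DecidableEq X] (A : UTA Q X) (i : ℕ) (q : Q) : Prop :=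
  ¬ RedAt A i q

/-- Absolute value of the constant of an atomic update. -/
def updBound {X : Type} : AtomicUp X → ℕ
  | .const c => c
  | .add _ d => d.natAbs

/-!
A delay cancels in `x - y`, so a diagonal constraint `φ` contributes to `v ⊑_G v'` only the
implication from `v ⊨ φ` to `v' ⊨ φ`. This restricts the choice of `v'` exactly when `v ⊨ φ`,
whence the case distinction on `φ` over `Z`.
-/

theorem Constr.sat_shift_of_isDiag {X : Type} {φ : Constr X} (hφ : φ.isDiag)
    (v : X → ℝ≥0) (δ : ℝ≥0) : Constr.sat (shift v δ) φ ↔ Constr.sat v φ := by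
  match φ, hφ with
  | .diag x y o d, _ =>
    simp only [Constr.sat, shift, NNReal.coe_add, add_sub_add_right_eq_sub]

theorem simG_insert {X : Type} {G : Set (Constr X)} {φ : Constr X} {v v' : X → ℝ≥0} :
    simG (insert φ G) v v' ↔
      (∀ δ : ℝ≥0, Constr.sat (shift v δ) φ → Constr.sat (shift v' δ) φ) ∧ simG G v v' :=
  Set.forall_mem_insert

theorem simG_insert_of_isDiag {X : Type} {G : Set (Constr X)} {φ : Constr X} (hφ : φ.isDiag)
    {v v' : X → ℝ≥0} :
    simG (insert φ G) v v' ↔ (Constr.sat v φ → Constr.sat v' φ) ∧ simG G v v' := by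
  simp only [simG_insert, Constr.sat_shift_of_isDiag hφ, forall_const]

theorem forall_mem_exists_mem_imp_and_iff {α β : Type*} {r : α → β → Prop} {p : α → Prop}
    {q : β → Prop} {s : Set α} {t : Set β} :
    (∀ a ∈ s, ∃ b ∈ t, (p a → q b) ∧ r a b) ↔
      (∀ a ∈ {a ∈ s | p a}, ∃ b ∈ {b ∈ t | q b}, r a b) ∧
        ∀ a ∈ {a ∈ s | ¬ p a}, ∃ b ∈ t, r a b := by
  constructor
  · intro h
    constructor
    · rintro a ⟨ha, hpa⟩
      obtain ⟨b, hb, hpq, hr⟩ := h a ha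
      exact ⟨b, ⟨hb, hpq hpa⟩, hr⟩
    · rintro a ⟨ha, -⟩
      obtain ⟨b, hb, -, hr⟩ := h a ha
      exact ⟨b, hb, hr⟩
  · rintro ⟨hpos, hneg⟩ a ha
    by_cases hpa : p a
    · obtain ⟨b, ⟨hb, hqb⟩, hr⟩ := hpos a ⟨ha, hpa⟩
      exact ⟨b, hb, fun _ => hqb, hr⟩
    · obtain ⟨b, hb, hr⟩ := hneg a ⟨ha, hpa⟩
      exact ⟨b, hb, fun h => absurd h hpa, hr⟩

theorem stmt8_general {X : Type} (G : Set (Constr X)) (φ : Constr X)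
    (hd : φ.isDiag) (Z Z' : Set (X → ℝ≥0)) :
    simGZ (insert φ G) Z Z' ↔
      (simGZ G {v ∈ Z | Constr.sat v φ} {v ∈ Z' | Constr.sat v φ} ∧
       simGZ G {v ∈ Z | ¬ Constr.sat v φ} Z') := by
  simp only [simGZ, simG_insert_of_isDiag hd]
  exact forall_mem_exists_mem_imp_and_iff

/-! ## The statement -/

theorem stmt8 {X : Type} [Fintype X] (G : Set (Constr X)) (φ : Constr X)
    (hd : φ.isDiag) (hG : φ ∈ G) (Z Z' : Set (X → ℝ≥0)) :
    simGZ G Z Z' ↔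
      (simGZ (G \ {φ}) {v ∈ Z | Constr.sat v φ} {v ∈ Z' | Constr.sat v φ} ∧
       simGZ (G \ {φ}) {v ∈ Z | ¬ Constr.sat v φ} Z') := by
  simpa only [Set.insert_sdiff_self_of_mem hG] using stmt8_general (G \ {φ}) φ hd Z Z'
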